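/- arXiv:1409.3142 — 3 statements merged into one kernel-verified Lean document; each statement's English description precedes it below -/
import Mathlib

section
/- For Ω ∈ Ω^N, k ≥ 2 and v_1,…,v_k ∈ 𝔛, define the Lie derivative along the multivector V = v_1∧⋯∧v_k by 𝓛_V Ω := d(ι(V)Ω) − (−1)^k·ι(V)(dΩ). Then (−1)^k·𝓛_V Ω = Σ_{1≤i<j≤k} (−1)^{i+j}·ι([v_i,v_j]∧v_1∧⋯∧v̂_i∧⋯∧v̂_j∧⋯∧v_k)Ω + Σ_{i=1}^{k} (−1)^i·ι(v_1∧⋯∧v̂_i∧⋯∧v_k)(𝓛_{v_i}Ω), where hats denote omitted entries. -/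
/-- Cartan calculus data over ℝ: a module `carrier` with graded pieces `deg i`
(`deg i = ⊥` for `i < 0`), a degree-`+1` differential `d` squaring to zero,
a real Lie algebra `X`, contractions `ι v` of degree `-1` depending linearly on `v`,
pairwise anticommuting, and satisfying the Cartan relation
`𝓛_v ∘ ι_w - ι_w ∘ 𝓛_v = ι_[v,w]` where `𝓛_v = d ∘ ι_v + ι_v ∘ d`. -/
structure CartanCalculus where
  carrier : Type
  [addCommGroup : AddCommGroup carrier]
  [module : Module ℝ carrier]
  deg : ℤ → Submodule ℝ carrier
  deg_neg : ∀ i : ℤ, i < 0 → deg i = ⊥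
  d : carrier →ₗ[ℝ] carrier
  d_deg : ∀ i : ℤ, ∀ a ∈ deg i, d a ∈ deg (i + 1)
  d_d : ∀ a : carrier, d (d a) = 0
  X : Type
  [lieRingX : LieRing X]
  [lieAlgebraX : LieAlgebra ℝ X]
  ι : X →ₗ[ℝ] carrier →ₗ[ℝ] carrier
  ι_deg : ∀ (v : X) (i : ℤ), ∀ a ∈ deg i, ι v a ∈ deg (i - 1)
  ι_ι : ∀ (v w : X) (a : carrier), ι v (ι w a) = - ι w (ι v a)
  cartan : ∀ (v w : X) (a : carrier),
      (d (ι v (ι w a)) + ι v (d (ι w a))) - ι w (d (ι v a) + ι v (d a)) = ι ⁅v, w⁆ a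

attribute [instance] CartanCalculus.addCommGroup CartanCalculus.module
  CartanCalculus.lieRingX CartanCalculus.lieAlgebraX

namespace CartanCalculus

/-- The Lie derivative `𝓛_v = d ∘ ι_v + ι_v ∘ d`. -/
def L (C : CartanCalculus) (v : C.X) : C.carrier →ₗ[ℝ] C.carrier :=
  C.d ∘ₗ C.ι v + C.ι v ∘ₗ C.d

/-- Iterated contraction: `iotaL [v₁, …, v_k] = ι_{v_k} ∘ ⋯ ∘ ι_{v₁}`, i.e. the
contraction `ι(v₁ ∧ ⋯ ∧ v_k)` (`ι_{v₁}` acts first). -/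
def iotaL (C : CartanCalculus) : List C.X → C.carrier →ₗ[ℝ] C.carrier
  | [] => LinearMap.id
  | v :: vs => (C.iotaL vs).comp (C.ι v)

end CartanCalculus

/-- Interpret a list as a `Fin k`-tuple (junk value `0` out of range). -/
def listToFun {α : Type} [Zero α] (k : ℕ) (l : List α) : Fin k → α :=
  fun m => l.getD m.val 0

/-- A map `𝔤^k → W` is multilinear. -/
def IsMultilinear {𝔤 : Type} [AddCommGroup 𝔤] [Module ℝ 𝔤] {W : Type}
    [AddCommGroup W] [Module ℝ W] {k : ℕ} (ψ : (Fin k → 𝔤) → W) : Prop :=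
  ∀ (x : Fin k → 𝔤) (i : Fin k),
    (∀ a b : 𝔤, ψ (Function.update x i (a + b))
        = ψ (Function.update x i a) + ψ (Function.update x i b)) ∧
    (∀ (c : ℝ) (a : 𝔤), ψ (Function.update x i (c • a)) = c • ψ (Function.update x i a))

/-- A map `𝔤^k → W` is alternating. -/
def IsAlternating {𝔤 : Type} {W : Type} [AddCommGroup W] {k : ℕ}
    (ψ : (Fin k → 𝔤) → W) : Prop :=
  ∀ (x : Fin k → 𝔤) (i j : Fin k), i ≠ j → x i = x j → ψ x = 0

/-- The Chevalley–Eilenberg differential of a `k`-cochain `ψ`: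
`(d_𝔤 ψ)(x₁,…,x_{k+1}) = Σ_{i<j} (-1)^{i+j} ψ([x_i,x_j], x₁, …, x̂_i, …, x̂_j, …, x_{k+1})`
(signs written for 1-based indices, as in the paper). -/
def dCE {𝔤 : Type} [LieRing 𝔤] [LieAlgebra ℝ 𝔤] {W : Type} [AddCommGroup W]
    [Module ℝ W] (k : ℕ) (ψ : (Fin k → 𝔤) → W) : (Fin (k + 1) → 𝔤) → W :=
  fun x => ∑ i : Fin (k + 1), ∑ j : Fin (k + 1),
    if (i : ℕ) < (j : ℕ) then
      ((-1 : ℝ) ^ ((i : ℕ) + (j : ℕ))) •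
        ψ (listToFun k (⁅x i, x j⁆ :: (((List.ofFn x).eraseIdx (j : ℕ)).eraseIdx (i : ℕ))))
    else 0

namespace CartanCalculus

/-- `σ_k(x₁,…,x_k) = ι(v_{x₁} ∧ ⋯ ∧ v_{x_k}) σ` where `v_x = ρ x`. -/
def lower (C : CartanCalculus) {𝔤 : Type} [LieRing 𝔤] [LieAlgebra ℝ 𝔤]
    (ρ : 𝔤 →ₗ⁅ℝ⁆ C.X) (k : ℕ) (σ : C.carrier) : (Fin k → 𝔤) → C.carrier :=
  fun x => C.iotaL (List.ofFn (fun i => ρ (x i))) σ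

/-- `F_k(x₁,…,x_k) = ι(v_{x₁} ∧ ⋯ ∧ v_{x_{k-1}}) (F x_k)`, with `F₀ := 0`. -/
def lowerF (C : CartanCalculus) {𝔤 : Type} [LieRing 𝔤] [LieAlgebra ℝ 𝔤]
    (ρ : 𝔤 →ₗ⁅ℝ⁆ C.X) (F : 𝔤 → C.carrier) : (k : ℕ) → (Fin k → 𝔤) → C.carrier
  | 0 => fun _ => 0
  | (k + 1) => fun x =>
      C.iotaL (List.ofFn (fun i : Fin k => ρ (x i.castSucc))) (F (x (Fin.last k)))

end CartanCalculus

/-- `ς(k) = -(-1)^{k(k+1)/2}`. -/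
def varsigma (k : ℕ) : ℝ := -((-1 : ℝ) ^ (k * (k + 1) / 2))

/-- A homotopy moment map for the invariant closed form `ω ∈ Ω^{n+1}`
(componentwise form of Def. 5.1 in [FRZ]): a family of alternating multilinear maps
`f_k : 𝔤^k → Ω^{n-k}` (`k = 1, …, n`) satisfying the moment map equations. -/
def IsMomentMap (C : CartanCalculus) {𝔤 : Type} [LieRing 𝔤] [LieAlgebra ℝ 𝔤]
    (ρ : 𝔤 →ₗ⁅ℝ⁆ C.X) (n : ℕ) (ω : C.carrier)
    (f : (k : ℕ) → (Fin k → 𝔤) → C.carrier) : Prop :=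
  (∀ k : ℕ, 1 ≤ k → k ≤ n →
      IsMultilinear (f k) ∧ IsAlternating (f k) ∧ ∀ x, f k x ∈ C.deg ((n : ℤ) - (k : ℤ))) ∧
  (∀ x : 𝔤, C.d (f 1 (fun _ => x)) = - C.ι (ρ x) ω) ∧
  (∀ k : ℕ, 2 ≤ k → k ≤ n → ∀ x : Fin k → 𝔤,
      (∑ i : Fin k, ∑ j : Fin k,
        if (i : ℕ) < (j : ℕ) then
          ((-1 : ℝ) ^ ((i : ℕ) + (j : ℕ) + 1)) •
            f (k - 1) (listToFun (k - 1)
              (⁅x i, x j⁆ :: (((List.ofFn x).eraseIdx (j : ℕ)).eraseIdx (i : ℕ))))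
        else 0)
      = C.d (f k x) + varsigma k • C.lower ρ k ω x) ∧
  (∀ x : Fin (n + 1) → 𝔤,
      (∑ i : Fin (n + 1), ∑ j : Fin (n + 1),
        if (i : ℕ) < (j : ℕ) then
          ((-1 : ℝ) ^ ((i : ℕ) + (j : ℕ) + 1)) •
            f n (listToFun n
              (⁅x i, x j⁆ :: (((List.ofFn x).eraseIdx (j : ℕ)).eraseIdx (i : ℕ))))
        else 0)
      = varsigma (n + 1) • C.lower ρ (n + 1) ω x)

/-! Write `𝓛_V = d ∘ ι(V) - (-1)^k ι(V) ∘ d`. Splitting off the first vector gives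
`𝓛_{w ∧ V} = 𝓛_V ∘ ι_w + (-1)^k ι(V) ∘ 𝓛_w`, so one inducts on `k`, applying the formula for `V`
to `ι_w Ω`. Commuting `ι_w` past each `𝓛_{v_i}` produces the terms `ι([w, v_i] ∧ ⋯)`, exactly
the brackets involving `w`; commuting `ι_w` past the `ι_{[v_i, v_j]}` yields the others. -/

namespace CartanCalculus

variable (C : CartanCalculus)

theorem L_apply (v : C.X) (a : C.carrier) : C.L v a = C.d (C.ι v a) + C.ι v (C.d a) := rfl

theorem iotaL_nil_apply (a : C.carrier) : C.iotaL [] a = a := rfl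

theorem iotaL_cons_apply (v : C.X) (l : List C.X) (a : C.carrier) :
    C.iotaL (v :: l) a = C.iotaL l (C.ι v a) := rfl

theorem iotaL_cons_cons_eq_neg (v w : C.X) (l : List C.X) (a : C.carrier) :
    C.iotaL (v :: w :: l) a = -C.iotaL (v :: l) (C.ι w a) := by
  rw [iotaL_cons_apply, iotaL_cons_apply, iotaL_cons_apply, C.ι_ι, map_neg]

theorem ι_L (v w : C.X) (a : C.carrier) :
    C.ι v (C.L w a) = C.L w (C.ι v a) + C.ι ⁅v, w⁆ a := by
  have cartan_swapped : C.L w (C.ι v a) - C.ι v (C.L w a) = -C.ι ⁅v, w⁆ a := by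
    rw [← LinearMap.neg_apply, ← map_neg, lie_skew]
    exact C.cartan w v a
  rw [← neg_eq_iff_eq_neg, neg_sub] at cartan_swapped
  rw [← cartan_swapped, add_sub_cancel]

theorem iotaL_cons_L (v w : C.X) (l : List C.X) (a : C.carrier) :
    C.iotaL (v :: l) (C.L w a) = C.iotaL l (C.L w (C.ι v a)) + C.iotaL (⁅v, w⁆ :: l) a := by
  rw [iotaL_cons_apply, ι_L, map_add, iotaL_cons_apply]

variable {k : ℕ}

/-- The Lie derivative `𝓛_V = d ∘ ι(V) - (-1)^k ι(V) ∘ d` along the decomposable multivector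
`V = v₁ ∧ ⋯ ∧ v_k`, given by the tuple of its factors. -/
def multivectorL (v : Fin k → C.X) : C.carrier →ₗ[ℝ] C.carrier :=
  C.d ∘ₗ C.iotaL (List.ofFn v) - (-1 : ℝ) ^ k • C.iotaL (List.ofFn v) ∘ₗ C.d

/-- The sum `Σ_{i<j} (-1)^{i+j} ι([v_i,v_j] ∧ v₁ ∧ ⋯ ∧ v̂_i ∧ ⋯ ∧ v̂_j ∧ ⋯ ∧ v_k) a`, that is, the
contraction with the Chevalley–Eilenberg boundary of `v₁ ∧ ⋯ ∧ v_k`. Removing the entry `j` before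
the smaller entry `i` keeps the index `i` valid. -/
def bracketSum (v : Fin k → C.X) (a : C.carrier) : C.carrier :=
  ∑ i : Fin k, ∑ j : Fin k,
    if (i : ℕ) < (j : ℕ) then
      ((-1 : ℝ) ^ ((i : ℕ) + (j : ℕ))) •
        C.iotaL (⁅v i, v j⁆ :: (((List.ofFn v).eraseIdx (j : ℕ)).eraseIdx (i : ℕ))) a
    else 0

/-- The sum `Σ_i (-1)^i ι(v₁ ∧ ⋯ ∧ v̂_i ∧ ⋯ ∧ v_k) (𝓛_{v_i} a)`; the exponent is `i + 1` because
`Fin k` counts from `0`. -/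
def lieDerivativeSum (v : Fin k → C.X) (a : C.carrier) : C.carrier :=
  ∑ i : Fin k,
    ((-1 : ℝ) ^ ((i : ℕ) + 1)) • C.iotaL ((List.ofFn v).eraseIdx (i : ℕ)) (C.L (v i) a)

/-- The sum `Σ_i (-1)^i ι([w,v_i] ∧ v₁ ∧ ⋯ ∧ v̂_i ∧ ⋯ ∧ v_k) a` (1-based signs): the part of
`bracketSum` of `w ∧ v₁ ∧ ⋯ ∧ v_k` that involves `w`. -/
def bracketSumWith (w : C.X) (v : Fin k → C.X) (a : C.carrier) : C.carrier :=
  ∑ i : Fin k,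
    ((-1 : ℝ) ^ ((i : ℕ) + 1)) • C.iotaL (⁅w, v i⁆ :: (List.ofFn v).eraseIdx (i : ℕ)) a

theorem multivectorL_apply (v : Fin k → C.X) (a : C.carrier) :
    C.multivectorL v a =
      C.d (C.iotaL (List.ofFn v) a) - (-1 : ℝ) ^ k • C.iotaL (List.ofFn v) (C.d a) := rfl

theorem multivectorL_cons (w : C.X) (v : Fin k → C.X) (a : C.carrier) :
    C.multivectorL (Fin.cons w v : Fin (k + 1) → C.X) a =
      C.multivectorL v (C.ι w a) + (-1 : ℝ) ^ k • C.iotaL (List.ofFn v) (C.L w a) := by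
  simp only [multivectorL_apply, List.ofFn_cons, iotaL_cons_apply, L_apply, map_add, pow_succ]
  module

theorem bracketSum_cons (w : C.X) (v : Fin k → C.X) (a : C.carrier) :
    C.bracketSum (Fin.cons w v : Fin (k + 1) → C.X) a =
      C.bracketSumWith w v a - C.bracketSum v (C.ι w a) := by
  have sign_shift (i j : ℕ) : (-1 : ℝ) ^ (i + 1 + (j + 1)) = (-1) ^ (i + j) := by ring
  simp [bracketSum, bracketSumWith, Fin.sum_univ_succ, sign_shift, iotaL_cons_cons_eq_neg,
    sub_eq_add_neg, ← Finset.sum_neg_distrib, neg_ite]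

theorem lieDerivativeSum_cons (w : C.X) (v : Fin k → C.X) (a : C.carrier) :
    C.lieDerivativeSum (Fin.cons w v : Fin (k + 1) → C.X) a =
      -C.iotaL (List.ofFn v) (C.L w a) -
        (C.lieDerivativeSum v (C.ι w a) + C.bracketSumWith w v a) := by
  have sum_tail :
      ∑ i : Fin k, (-1 : ℝ) ^ ((i : ℕ) + 1 + 1) •
          C.iotaL (w :: (List.ofFn v).eraseIdx (i : ℕ)) (C.L (v i) a) =
        -(C.lieDerivativeSum v (C.ι w a) + C.bracketSumWith w v a) := by
    simp only [lieDerivativeSum, bracketSumWith, ← Finset.sum_add_distrib,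
      ← Finset.sum_neg_distrib, iotaL_cons_L, smul_add, pow_succ _ (_ + 1), mul_neg_one, neg_smul,
      neg_add]
  rw [sub_eq_add_neg, ← sum_tail]
  simp [lieDerivativeSum, Fin.sum_univ_succ]

end CartanCalculus

theorem lie_derivative_along_multivector_general (C : CartanCalculus) (a : C.carrier) {k : ℕ}
    (v : Fin k → C.X) :
    (-1 : ℝ) ^ k • C.multivectorL v a = C.bracketSum v a + C.lieDerivativeSum v a := by
  induction v using Fin.consInduction generalizing a with
  | elim0 =>
    simp [C.multivectorL_apply, C.iotaL_nil_apply, CartanCalculus.bracketSum,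
      CartanCalculus.lieDerivativeSum]
  | @cons k w v ih =>
    have sign_sq : (-1 : ℝ) ^ k * (-1) ^ k = 1 := by rw [← mul_pow]; simp
    calc (-1 : ℝ) ^ (k + 1) • C.multivectorL (Fin.cons w v : Fin (k + 1) → C.X) a
      _ = -((-1 : ℝ) ^ k • C.multivectorL v (C.ι w a)) - C.iotaL (List.ofFn v) (C.L w a) := by
        rw [C.multivectorL_cons, pow_succ, mul_neg_one, neg_smul, smul_add, smul_smul, sign_sq,
          one_smul, neg_add']
      _ = -(C.bracketSum v (C.ι w a) + C.lieDerivativeSum v (C.ι w a)) -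
            C.iotaL (List.ofFn v) (C.L w a) := by
        rw [ih]
      _ = C.bracketSum (Fin.cons w v : Fin (k + 1) → C.X) a +
            C.lieDerivativeSum (Fin.cons w v : Fin (k + 1) → C.X) a := by
        rw [C.bracketSum_cons, C.lieDerivativeSum_cons]
        abel

/-- For `Ω ∈ Ω^N`, `k ≥ 2` and `V = v₁∧⋯∧v_k`, with
`𝓛_V Ω := d(ι(V)Ω) - (-1)^k ι(V)(dΩ)`, one has
`(-1)^k 𝓛_V Ω = Σ_{i<j} (-1)^{i+j} ι([v_i,v_j]∧v₁∧⋯∧v̂_i∧⋯∧v̂_j∧⋯∧v_k)Ω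
 + Σ_i (-1)^i ι(v₁∧⋯∧v̂_i∧⋯∧v_k)(𝓛_{v_i}Ω)` (signs for 1-based indices). -/
theorem lie_derivative_along_multivector (C : CartanCalculus) (N : ℤ) (a : C.carrier)
    (ha : a ∈ C.deg N) (k : ℕ) (hk : 2 ≤ k) (v : Fin k → C.X) :
    ((-1 : ℝ) ^ k) •
        (C.d (C.iotaL (List.ofFn v) a) - ((-1 : ℝ) ^ k) • C.iotaL (List.ofFn v) (C.d a))
      = (∑ i : Fin k, ∑ j : Fin k,
          if (i : ℕ) < (j : ℕ) then
            ((-1 : ℝ) ^ ((i : ℕ) + (j : ℕ))) •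
              C.iotaL (⁅v i, v j⁆ :: (((List.ofFn v).eraseIdx (j : ℕ)).eraseIdx (i : ℕ))) a
          else 0)
        + (∑ i : Fin k,
            ((-1 : ℝ) ^ ((i : ℕ) + 1)) •
              C.iotaL ((List.ofFn v).eraseIdx (i : ℕ)) (C.L (v i) a)) :=
  lie_derivative_along_multivector_general C a v
end

section
/- (Moment maps are primitives of ω̃) Let φ_k : 𝔤^k → Ω^{n−k} (k = 1,…,n) be alternating multilinear maps. The following are equivalent: (i) d(φ_1(x)) = −ι_{v_x}ω for all x ∈ 𝔤, d_𝔤φ_{k−1} + (−1)^k·dφ_k = (−1)^{k−1}·ω_k for all 2 ≤ k ≤ n, and d_𝔤φ_n = (−1)^n·ω_{n+1} (that is, d_tot(φ_1+⋯+φ_n) = ω̃ where ω̃ := Σ_{k=1}^{n+1}(−1)^{k−1}ω_k); (ii) the maps f_k := ς(k)·φ_k (k = 1,…,n) form a homotopy moment map for ω. -/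
/-!
The two systems of equations have the same shape: the sum over brackets in the moment map equations
is `-d_𝔤 f_k`, and since `ς(k+1) = (-1)^{k+1} ς(k)` with `ς(k) ≠ 0`, multiplying
`d_𝔤 φ_k + (-1)^{k+1} dφ_{k+1} = (-1)^k ω_{k+1}` by `-ς(k)` gives exactly the moment map equation
for `f_k = ς(k) φ_k`.
-/

section Cochain

variable {𝔤 : Type} {W : Type} [AddCommGroup W] [Module ℝ W] {k : ℕ}

theorem IsMultilinear.const_smul [AddCommGroup 𝔤] [Module ℝ 𝔤] {ψ : (Fin k → 𝔤) → W}
    (hψ : IsMultilinear ψ) (c : ℝ) : IsMultilinear (fun x => c • ψ x) := fun x i =>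
  ⟨fun a b => by simp only [(hψ x i).1, smul_add],
    fun r a => by simp only [(hψ x i).2, smul_comm c r]⟩

theorem IsAlternating.const_smul {ψ : (Fin k → 𝔤) → W} (hψ : IsAlternating ψ) (c : ℝ) :
    IsAlternating (fun x => c • ψ x) := fun x i j hij hx => by
  simp only [hψ x i j hij hx, smul_zero]

variable [LieRing 𝔤] [LieAlgebra ℝ 𝔤]

theorem dCE_const_smul (c : ℝ) (ψ : (Fin k → 𝔤) → W) (x : Fin (k + 1) → 𝔤) :
    dCE k (fun y => c • ψ y) x = c • dCE k ψ x := by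
  simp only [dCE, Finset.smul_sum, smul_ite, smul_zero, smul_comm c]

theorem sum_neg_one_pow_succ_smul_eq_neg_dCE (ψ : (Fin k → 𝔤) → W) (x : Fin (k + 1) → 𝔤) :
    (∑ i : Fin (k + 1), ∑ j : Fin (k + 1),
      if (i : ℕ) < (j : ℕ) then
        ((-1 : ℝ) ^ ((i : ℕ) + (j : ℕ) + 1)) •
          ψ (listToFun k (⁅x i, x j⁆ :: (((List.ofFn x).eraseIdx (j : ℕ)).eraseIdx (i : ℕ))))
      else 0) = -dCE k ψ x := by
  simp only [dCE, pow_succ, mul_neg_one, neg_smul, ← Finset.sum_neg_distrib, neg_ite, neg_zero]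

end Cochain

theorem isMomentMap_iff_dCE (C : CartanCalculus) {𝔤 : Type} [LieRing 𝔤] [LieAlgebra ℝ 𝔤]
    (ρ : 𝔤 →ₗ⁅ℝ⁆ C.X) (n : ℕ) (ω : C.carrier) (f : (k : ℕ) → (Fin k → 𝔤) → C.carrier) :
    IsMomentMap C ρ n ω f ↔
      (∀ k : ℕ, 1 ≤ k → k ≤ n →
        IsMultilinear (f k) ∧ IsAlternating (f k) ∧ ∀ x, f k x ∈ C.deg ((n : ℤ) - (k : ℤ))) ∧
      (∀ x : 𝔤, C.d (f 1 (fun _ => x)) = - C.ι (ρ x) ω) ∧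
      (∀ k : ℕ, 1 ≤ k → k + 1 ≤ n → ∀ x : Fin (k + 1) → 𝔤,
        -dCE k (f k) x = C.d (f (k + 1) x) + varsigma (k + 1) • C.lower ρ (k + 1) ω x) ∧
      (∀ x : Fin (n + 1) → 𝔤, -dCE n (f n) x = varsigma (n + 1) • C.lower ρ (n + 1) ω x) := by
  simp only [← sum_neg_one_pow_succ_smul_eq_neg_dCE]
  refine and_congr_right' (and_congr_right' (and_congr_left' ⟨fun h k hk => ?_, fun h k hk => ?_⟩))
  · exact h (k + 1) (Nat.succ_le_succ hk)
  · obtain ⟨m, rfl⟩ := Nat.exists_eq_add_of_le' (one_le_two.trans hk)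
    exact h m (Nat.le_of_succ_le_succ hk)

theorem varsigma_one : varsigma 1 = 1 := by
  norm_num [varsigma]

theorem varsigma_ne_zero (k : ℕ) : varsigma k ≠ 0 :=
  neg_ne_zero.mpr (pow_ne_zero _ (neg_ne_zero.mpr one_ne_zero))

theorem varsigma_succ (k : ℕ) : varsigma (k + 1) = (-1) ^ (k + 1) * varsigma k := by
  have triangle_succ : (k + 1) * (k + 1 + 1) / 2 = k * (k + 1) / 2 + (k + 1) := by
    rw [← Nat.add_mul_div_right _ _ two_pos]
    ring_nf
  rw [varsigma, varsigma, triangle_succ, pow_add]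
  ring

section Sign

variable {W : Type*} [AddCommGroup W] [Module ℝ W]

theorem eq_neg_one_pow_smul_iff_varsigma (k : ℕ) (a b : W) :
    a = (-1 : ℝ) ^ k • b ↔ -(varsigma k • a) = varsigma (k + 1) • b := by
  have varsigma_succ_smul : varsigma (k + 1) • b = -(varsigma k • (-1 : ℝ) ^ k • b) := by
    rw [varsigma_succ, pow_succ]
    module
  rw [varsigma_succ_smul, neg_inj, smul_right_inj (varsigma_ne_zero k)]

theorem add_neg_one_pow_smul_eq_iff_varsigma (k : ℕ) (a b c : W) :
    a + (-1 : ℝ) ^ (k + 1) • b = (-1 : ℝ) ^ k • c ↔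
      -(varsigma k • a) = varsigma (k + 1) • b + varsigma (k + 1) • c := by
  rw [← smul_add, ← eq_neg_one_pow_smul_iff_varsigma, pow_succ, mul_neg_one, neg_smul,
    ← sub_eq_add_neg, sub_eq_iff_eq_add', smul_add]

end Sign

theorem momentMap_iff_primitive_general (C : CartanCalculus) {𝔤 : Type} [LieRing 𝔤]
    [LieAlgebra ℝ 𝔤] (ρ : 𝔤 →ₗ⁅ℝ⁆ C.X) (n : ℕ) (ω : C.carrier)
    (φ : (k : ℕ) → (Fin k → 𝔤) → C.carrier)
    (hmult : ∀ k : ℕ, 1 ≤ k → k ≤ n → IsMultilinear (φ k))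
    (halt : ∀ k : ℕ, 1 ≤ k → k ≤ n → IsAlternating (φ k))
    (hdeg : ∀ k : ℕ, 1 ≤ k → k ≤ n → ∀ x, φ k x ∈ C.deg ((n : ℤ) - (k : ℤ))) :
    ((∀ x : 𝔤, C.d (φ 1 (fun _ => x)) = - C.ι (ρ x) ω) ∧
     (∀ k : ℕ, 1 ≤ k → k + 1 ≤ n → ∀ x : Fin (k + 1) → 𝔤,
        dCE k (φ k) x + ((-1 : ℝ) ^ (k + 1)) • C.d (φ (k + 1) x)
          = ((-1 : ℝ) ^ k) • C.lower ρ (k + 1) ω x) ∧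
     (∀ x : Fin (n + 1) → 𝔤,
        dCE n (φ n) x = ((-1 : ℝ) ^ n) • C.lower ρ (n + 1) ω x))
    ↔ IsMomentMap C ρ n ω (fun k x => varsigma k • φ k x) := by
  have cochains : ∀ k : ℕ, 1 ≤ k → k ≤ n →
      IsMultilinear (fun x => varsigma k • φ k x) ∧ IsAlternating (fun x => varsigma k • φ k x) ∧
        ∀ x, varsigma k • φ k x ∈ C.deg ((n : ℤ) - (k : ℤ)) := fun k hk hkn =>
    ⟨(hmult k hk hkn).const_smul _, (halt k hk hkn).const_smul _,
      fun x => Submodule.smul_mem _ _ (hdeg k hk hkn x)⟩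
  rw [isMomentMap_iff_dCE, and_iff_right cochains]
  simp only [varsigma_one, one_smul, dCE_const_smul, map_smul]
  exact and_congr_right' (and_congr
    (forall₄_congr fun k _ _ _ => add_neg_one_pow_smul_eq_iff_varsigma k _ _ _)
    (forall_congr' fun _ => eq_neg_one_pow_smul_iff_varsigma n _ _))

/-- moment maps are primitives of `ω̃`, Prop. 2.5 of the paper.
Alternating multilinear maps `φ_k : 𝔤^k → Ω^{n-k}` (`k = 1,…,n`) satisfy
`d_tot(φ₁ + ⋯ + φ_n) = ω̃` — componentwise: `d(φ₁ x) = -ι_{v_x}ω`,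
`d_𝔤 φ_k + (-1)^{k+1} dφ_{k+1} = (-1)^k ω_{k+1}` for `1 ≤ k`, `k+1 ≤ n`, and
`d_𝔤 φ_n = (-1)^n ω_{n+1}` — if and only if `f_k := ς(k)·φ_k` is a homotopy
moment map for `ω`. -/
theorem momentMap_iff_primitive (C : CartanCalculus) {𝔤 : Type} [LieRing 𝔤]
    [LieAlgebra ℝ 𝔤] (ρ : 𝔤 →ₗ⁅ℝ⁆ C.X) (n : ℕ) (hn : 1 ≤ n) (ω : C.carrier)
    (hω : ω ∈ C.deg ((n : ℤ) + 1)) (hcl : C.d ω = 0)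
    (hinv : ∀ x : 𝔤, C.L (ρ x) ω = 0)
    (φ : (k : ℕ) → (Fin k → 𝔤) → C.carrier)
    (hmult : ∀ k : ℕ, 1 ≤ k → k ≤ n → IsMultilinear (φ k))
    (halt : ∀ k : ℕ, 1 ≤ k → k ≤ n → IsAlternating (φ k))
    (hdeg : ∀ k : ℕ, 1 ≤ k → k ≤ n → ∀ x, φ k x ∈ C.deg ((n : ℤ) - (k : ℤ))) :
    ((∀ x : 𝔤, C.d (φ 1 (fun _ => x)) = - C.ι (ρ x) ω) ∧
     (∀ k : ℕ, 1 ≤ k → k + 1 ≤ n → ∀ x : Fin (k + 1) → 𝔤,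
        dCE k (φ k) x + ((-1 : ℝ) ^ (k + 1)) • C.d (φ (k + 1) x)
          = ((-1 : ℝ) ^ k) • C.lower ρ (k + 1) ω x) ∧
     (∀ x : Fin (n + 1) → 𝔤,
        dCE n (φ n) x = ((-1 : ℝ) ^ n) • C.lower ρ (n + 1) ω x))
    ↔ IsMomentMap C ρ n ω (fun k x => varsigma k • φ k x) :=
  momentMap_iff_primitive_general C ρ n ω φ hmult halt hdeg
end

section
/- Let N ≥ 0 and let F : 𝔤 → Ω^N be linear and equivariant with ι_{v_x}(F(x)) = 0 for all x ∈ 𝔤. Then: (1) each multilinear map F_k is alternating; (2) the map dF : x ↦ d(F(x)) is linear and equivariant and satisfies ι_{v_x}(d(F(x))) = 0 for all x ∈ 𝔤; (3) for every k ≥ 2 and all x_1,…,x_k ∈ 𝔤, (−1)^{k−1}·d(F_k(x_1,…,x_k)) = (d_𝔤F_{k−1})(x_1,…,x_k) + (dF)_k(x_1,…,x_k), where (dF)_k(x_1,…,x_k) := ι(v_{x_1}∧⋯∧v_{x_{k−1}})(d(F(x_k))). Equivalently, F̃ := F_1 + F_2 + ⋯ satisfies d_tot F̃ = −(dF)~,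 where d_tot acts on a family (ψ_k) of multilinear maps 𝔤^k → Ω by d_𝔤ψ_k + (−1)^k dψ_k. -/
/-!
For an alternating multilinear `ψ : 𝔤^{k+1} → W`, the Chevalley–Eilenberg differential satisfies the
Cartan formula `(d_𝔤 ψ)(x, y) = -∑ j, ψ(y₁, …, [x, y_j], …, y_{k+1}) - d_𝔤(ψ(x, ·))(y)`.
Here `F_{k+2}(x, y) = (-1)^k ι_{v_x} F_{k+1}(y)`, and for `ψ = F_{k+1}` equivariance turns the sum
into `𝓛_{v_x} F_{k+1}(y)`; comparing with `d ∘ ι_{v_x} = 𝓛_{v_x} - ι_{v_x} ∘ d` gives the chain-map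
identity by induction on `k`.
-/

theorem listToFun_cons {α : Type} [Zero α] (k : ℕ) (a : α) (l : List α) :
    listToFun (k + 1) (a :: l) = Fin.cons a (listToFun k l) := by
  funext i
  cases i using Fin.cases <;> simp [listToFun]

theorem listToFun_eraseIdx_ofFn {α : Type} [Zero α] {k : ℕ} (x : Fin (k + 1) → α)
    (j : Fin (k + 1)) : listToFun k ((List.ofFn x).eraseIdx j) = j.removeNth x := by
  funext ⟨i, hi⟩
  rw [Fin.removeNth_apply]
  by_cases hij : i < j
  · rw [Fin.succAbove_of_castSucc_lt _ _ hij]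
    simp [listToFun, List.getElem?_eraseIdx_of_lt hij, hi.le, -List.ofFn_succ]
  · rw [Fin.succAbove_of_le_castSucc _ _ (not_lt.mp hij)]
    simp [listToFun, List.getElem?_eraseIdx_of_ge (not_lt.mp hij), hi, -List.ofFn_succ]

section AlternatingMap

variable {R M W : Type*} [CommRing R] [AddCommGroup M] [Module R M] [AddCommGroup W] [Module R W]
  {k : ℕ}

theorem neg_one_pow_smul_alternatingMap_cons_removeNth (ψ : M [⋀^Fin (k + 1)]→ₗ[R] W)
    (x : Fin (k + 1) → M) (j : Fin (k + 1)) (a : M) :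
    (-1 : R) ^ (j : ℕ) • ψ (Fin.cons a (j.removeNth x)) = ψ (Function.update x j a) := by
  rw [← Fin.insertNth_removeNth, ψ.map_insertNth, ← Int.cast_smul_eq_zsmul R]
  simp [Matrix.vecCons]

theorem alternatingMap_cons_cons_swap (ψ : M [⋀^Fin (k + 2)]→ₗ[R] W) (a b : M) (x : Fin k → M) :
    ψ (Fin.cons a (Fin.cons b x)) = -ψ (Fin.cons b (Fin.cons a x)) := by
  have swap_eq : (Fin.cons a (Fin.cons b x) : Fin (k + 2) → M) =
      (Fin.cons b (Fin.cons a x) : Fin (k + 2) → M) ∘ Equiv.swap 0 1 := by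
    rw [Equiv.comp_swap_eq_update, Fin.cons_zero, Fin.cons_one, Fin.cons_zero,
      ← Fin.succ_zero_eq_one, ← Fin.cons_update, Fin.update_cons_zero, Fin.update_cons_zero]
  rw [swap_eq, ψ.map_swap _ Fin.zero_ne_one]

end AlternatingMap

/-- The alternating map bundling a function `ψ : M^k → W` that is multilinear and alternating, so
that Mathlib's sign rules for permuting arguments apply to `ψ`. -/
def IsMultilinear.toAlternatingMap {M W : Type} [AddCommGroup M] [Module ℝ M] [AddCommGroup W]
    [Module ℝ W] {k : ℕ} {ψ : (Fin k → M) → W} (hmul : IsMultilinear ψ)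
    (halt : IsAlternating ψ) : M [⋀^Fin k]→ₗ[ℝ] W where
  toFun := ψ
  map_update_add' x i a b := by convert (hmul x i).1 a b
  map_update_smul' x i c a := by convert (hmul x i).2 c a
  map_eq_zero_of_eq' x i j hx hij := halt x i j hij hx

section ChevalleyEilenberg

variable {𝔤 : Type} [LieRing 𝔤] [LieAlgebra ℝ 𝔤] {W W' : Type} [AddCommGroup W] [Module ℝ W]
  [AddCommGroup W'] [Module ℝ W'] {k : ℕ}

theorem dCE_zero (ψ : (Fin 0 → 𝔤) → W) (x : Fin 1 → 𝔤) : dCE 0 ψ x = 0 := by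
  simp [dCE]

theorem dCE_map (f : W →ₗ[ℝ] W') (ψ : (Fin k → 𝔤) → W) (x : Fin (k + 1) → 𝔤) :
    dCE k (fun y => f (ψ y)) x = f (dCE k ψ x) := by
  simp only [dCE, map_sum, apply_ite f, map_smul, map_zero]

theorem dCE_cons (ψ : 𝔤 [⋀^Fin (k + 1)]→ₗ[ℝ] W) (x : 𝔤) (y : Fin (k + 1) → 𝔤) :
    dCE (k + 1) ψ (Fin.cons x y) =
      -∑ j, ψ (Function.update y j ⁅x, y j⁆) - dCE k (fun z => ψ (Fin.cons x z)) y := by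
  have head_terms (j : Fin (k + 1)) :
      (-1 : ℝ) ^ (j + 1 : ℕ) • ψ (listToFun (k + 1) (⁅x, y j⁆ :: (List.ofFn y).eraseIdx j)) =
        -ψ (Function.update y j ⁅x, y j⁆) := by
    rw [listToFun_cons, listToFun_eraseIdx_ofFn, pow_succ, mul_neg_one, neg_smul,
      neg_one_pow_smul_alternatingMap_cons_removeNth]
  have tail_terms (i j : Fin (k + 1)) (l : List 𝔤) :
      (if (i + 1 : ℕ) < j + 1 then
        (-1 : ℝ) ^ ((i + 1) + (j + 1) : ℕ) • ψ (listToFun (k + 1) (⁅y i, y j⁆ :: x :: l)) else 0) =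
      -if (i : ℕ) < j then
        (-1 : ℝ) ^ (i + j : ℕ) • ψ (Fin.cons x (listToFun k (⁅y i, y j⁆ :: l))) else 0 := by
    cases k with
    | zero => simp
    | succ k =>
      have sign_eq : (-1 : ℝ) ^ ((i + 1) + (j + 1) : ℕ) = (-1) ^ (i + j : ℕ) := by ring
      simp only [listToFun_cons, alternatingMap_cons_cons_swap ψ x, sign_eq,
        add_lt_add_iff_right, smul_neg]
      split_ifs <;> simp
  simp only [dCE, Fin.sum_univ_succ (n := k + 1), List.ofFn_cons, Fin.cons_zero, Fin.cons_succ,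
    Fin.val_zero, Fin.val_succ, List.eraseIdx_cons_succ, List.eraseIdx_cons_zero, tail_terms,
    Nat.succ_pos, if_true, Nat.not_lt_zero, if_false, zero_add, head_terms,
    Finset.sum_neg_distrib, sub_eq_add_neg]

end ChevalleyEilenberg

namespace CartanCalculus

variable (C : CartanCalculus)

theorem d_ι (v : C.X) (a : C.carrier) : C.d (C.ι v a) = C.L v a - C.ι v (C.d a) := by
  simp [L]

theorem ι_ι_self (v : C.X) (a : C.carrier) : C.ι v (C.ι v a) = 0 := by
  have : IsAddTorsionFree C.carrier := .of_isTorsionFree ℝ _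
  exact self_eq_neg.mp (C.ι_ι v v a)

theorem L_ι (v w : C.X) (a : C.carrier) :
    C.L v (C.ι w a) = C.ι ⁅v, w⁆ a + C.ι w (C.L v a) := by
  rw [← C.cartan]
  simp [L]

theorem L_d (v : C.X) (a : C.carrier) : C.L v (C.d a) = C.d (C.L v a) := by
  simp [L, C.d_d]

theorem iotaL_ι (vs : List C.X) (v : C.X) (a : C.carrier) :
    C.iotaL vs (C.ι v a) = (-1 : ℝ) ^ vs.length • C.ι v (C.iotaL vs a) := by
  induction vs generalizing a with
  | nil => simp [iotaL]
  | cons w vs ih => simp [iotaL, C.ι_ι w v, ih, pow_succ]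

variable {𝔤 : Type} [LieRing 𝔤] [LieAlgebra ℝ 𝔤] (ρ : 𝔤 →ₗ⁅ℝ⁆ C.X)

theorem lowerF_one (F : 𝔤 → C.carrier) (x : Fin 1 → 𝔤) : C.lowerF ρ F 1 x = F (x 0) := by
  simp [lowerF, iotaL]

theorem lowerF_cons (F : 𝔤 → C.carrier) {k : ℕ} (x : 𝔤) (y : Fin (k + 1) → 𝔤) :
    C.lowerF ρ F (k + 2) (Fin.cons x y) =
      (-1 : ℝ) ^ k • C.ι (ρ x) (C.lowerF ρ F (k + 1) y) := by
  simp [lowerF, List.ofFn_succ, iotaL, iotaL_ι, ← Fin.succ_last]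

theorem isMultilinear_lowerF (F : 𝔤 →ₗ[ℝ] C.carrier) (k : ℕ) :
    IsMultilinear (C.lowerF ρ F (k + 1)) := by
  induction k with
  | zero =>
    intro x i
    obtain rfl := Fin.fin_one_eq_zero i
    simp [lowerF_one]
  | succ k ih =>
    intro x i
    cases x using Fin.consCases with | _ a y =>
    cases i using Fin.cases with
    | zero => simp [lowerF_cons, smul_comm _ ((-1 : ℝ) ^ k)]
    | succ j =>
      simp [← Fin.cons_update, lowerF_cons, (ih y j).1, (ih y j).2, smul_comm _ ((-1 : ℝ) ^ k)]

theorem ι_lowerF_eq_zero {F : 𝔤 → C.carrier} (hvan : ∀ x, C.ι (ρ x) (F x) = 0) {k : ℕ}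
    (x : Fin k → 𝔤) (i : Fin k) : C.ι (ρ (x i)) (C.lowerF ρ F k x) = 0 := by
  induction x using Fin.consInduction with
  | elim0 => exact i.elim0
  | @cons k a y ih =>
    cases k with
    | zero =>
      obtain rfl := Fin.fin_one_eq_zero i
      simp [lowerF_one, hvan]
    | succ k =>
      rw [lowerF_cons, map_smul]
      cases i using Fin.cases with
      | zero => simp [ι_ι_self]
      | succ j => simp [C.ι_ι _ (ρ a), ih]

theorem isAlternating_lowerF {F : 𝔤 → C.carrier} (hvan : ∀ x, C.ι (ρ x) (F x) = 0) (k : ℕ) :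
    IsAlternating (C.lowerF ρ F k) := by
  intro x i j hij hx
  induction x using Fin.consInduction with
  | elim0 => exact i.elim0
  | @cons k a y ih =>
    cases k with
    | zero => exact absurd (Subsingleton.elim (α := Fin 1) i j) hij
    | succ k =>
      rw [lowerF_cons]
      cases i using Fin.cases with
      | zero =>
        cases j using Fin.cases with
        | zero => exact absurd rfl hij
        | succ j =>
          obtain rfl : a = y j := hx
          simp [C.ι_lowerF_eq_zero ρ hvan]
      | succ i =>
        cases j using Fin.cases with
        | zero =>
          obtain rfl : y i = a := hx
          simp [C.ι_lowerF_eq_zero ρ hvan]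
        | succ j => simp [ih i j (by simpa using hij) (by simpa using hx)]

theorem L_lowerF {F : 𝔤 → C.carrier} (hequiv : ∀ x y, C.L (ρ x) (F y) = F ⁅x, y⁆) {k : ℕ}
    (x : 𝔤) (y : Fin k → 𝔤) :
    C.L (ρ x) (C.lowerF ρ F k y) = ∑ j, C.lowerF ρ F k (Function.update y j ⁅x, y j⁆) := by
  induction y using Fin.consInduction with
  | elim0 => simp [lowerF]
  | @cons k a y ih =>
    cases k with
    | zero => simp [lowerF_one, hequiv]
    | succ k =>
      simp [Fin.sum_univ_succ (n := k + 1), ← Fin.cons_update, lowerF_cons, L_ι, ih,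
        Finset.smul_sum]

theorem dCE_lowerF_comp_cons (F : 𝔤 → C.carrier) {k : ℕ} (x : 𝔤) (y : Fin (k + 1) → 𝔤) :
    dCE k (fun z => C.lowerF ρ F (k + 1) (Fin.cons x z)) y =
      -((-1 : ℝ) ^ k • C.ι (ρ x) (dCE k (C.lowerF ρ F k) y)) := by
  cases k with
  | zero => simp [dCE_zero]
  | succ k =>
    simp only [lowerF_cons]
    simpa [pow_succ] using dCE_map ((-1 : ℝ) ^ k • C.ι (ρ x)) (C.lowerF ρ F (k + 1)) y

theorem dCE_lowerF_cons {F : 𝔤 →ₗ[ℝ] C.carrier} (hvan : ∀ x, C.ι (ρ x) (F x) = 0) {k : ℕ}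
    (x : 𝔤) (y : Fin (k + 1) → 𝔤) :
    dCE (k + 1) (C.lowerF ρ F (k + 1)) (Fin.cons x y) =
      -∑ j, C.lowerF ρ F (k + 1) (Function.update y j ⁅x, y j⁆) +
        (-1 : ℝ) ^ k • C.ι (ρ x) (dCE k (C.lowerF ρ F k) y) := by
  rw [← neg_neg ((-1 : ℝ) ^ k • _), ← dCE_lowerF_comp_cons, ← sub_eq_add_neg]
  exact dCE_cons ((C.isMultilinear_lowerF ρ F k).toAlternatingMap
    (C.isAlternating_lowerF ρ hvan (k + 1))) x y

theorem neg_one_pow_smul_d_lowerF {F : 𝔤 →ₗ[ℝ] C.carrier}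
    (hequiv : ∀ x y, C.L (ρ x) (F y) = F ⁅x, y⁆) (hvan : ∀ x, C.ι (ρ x) (F x) = 0) {k : ℕ}
    (x : Fin (k + 1) → 𝔤) :
    (-1 : ℝ) ^ k • C.d (C.lowerF ρ F (k + 1) x) =
      dCE k (C.lowerF ρ F k) x + C.lowerF ρ (fun y => C.d (F y)) (k + 1) x := by
  induction k with
  | zero => simp [lowerF_one, dCE_zero]
  | succ k ih =>
    cases x using Fin.consCases with | _ x y =>
    have sign_mul_self : (-1 : ℝ) ^ k * (-1) ^ k = 1 := by simp [← mul_pow]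
    calc
      (-1 : ℝ) ^ (k + 1) • C.d (C.lowerF ρ F (k + 2) (Fin.cons x y))
      _ = -C.d (C.ι (ρ x) (C.lowerF ρ F (k + 1) y)) := by
        simp [lowerF_cons, pow_succ, smul_smul, sign_mul_self]
      _ = -C.L (ρ x) (C.lowerF ρ F (k + 1) y) + C.ι (ρ x) (C.d (C.lowerF ρ F (k + 1) y)) := by
        rw [d_ι, neg_sub, sub_eq_neg_add]
      _ = -C.L (ρ x) (C.lowerF ρ F (k + 1) y) + (-1 : ℝ) ^ k • C.ι (ρ x)
            (dCE k (C.lowerF ρ F k) y + C.lowerF ρ (fun z => C.d (F z)) (k + 1) y) := by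
        rw [← ih, map_smul, smul_smul, sign_mul_self, one_smul]
      _ = dCE (k + 1) (C.lowerF ρ F (k + 1)) (Fin.cons x y)
            + C.lowerF ρ (fun z => C.d (F z)) (k + 2) (Fin.cons x y) := by
        rw [C.L_lowerF ρ hequiv, C.dCE_lowerF_cons ρ hvan, lowerF_cons, map_add, smul_add,
          add_assoc]

theorem ι_d_eq_zero_of_equivariant {F : 𝔤 →ₗ[ℝ] C.carrier}
    (hequiv : ∀ x y, C.L (ρ x) (F y) = F ⁅x, y⁆) (hvan : ∀ x, C.ι (ρ x) (F x) = 0) (x : 𝔤) :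
    C.ι (ρ x) (C.d (F x)) = 0 := by
  simpa [L, hvan] using hequiv x x

end CartanCalculus

theorem lowerF_chain_map_general (C : CartanCalculus) {𝔤 : Type} [LieRing 𝔤] [LieAlgebra ℝ 𝔤]
    (ρ : 𝔤 →ₗ⁅ℝ⁆ C.X) (F : 𝔤 →ₗ[ℝ] C.carrier)
    (hequiv : ∀ x y : 𝔤, C.L (ρ x) (F y) = F ⁅x, y⁆)
    (hvan : ∀ x : 𝔤, C.ι (ρ x) (F x) = 0) :
    (∀ k : ℕ, IsAlternating (C.lowerF ρ F k)) ∧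
    ((∀ x y : 𝔤, C.d (F (x + y)) = C.d (F x) + C.d (F y)) ∧
     (∀ (c : ℝ) (x : 𝔤), C.d (F (c • x)) = c • C.d (F x)) ∧
     (∀ x y : 𝔤, C.L (ρ x) (C.d (F y)) = C.d (F ⁅x, y⁆)) ∧
     (∀ x : 𝔤, C.ι (ρ x) (C.d (F x)) = 0)) ∧
    (∀ (k : ℕ) (x : Fin (k + 1) → 𝔤),
      (-1 : ℝ) ^ k • C.d (C.lowerF ρ F (k + 1) x) =
        dCE k (C.lowerF ρ F k) x + C.lowerF ρ (fun y => C.d (F y)) (k + 1) x) :=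
  have map_add_dF (x y : 𝔤) : C.d (F (x + y)) = C.d (F x) + C.d (F y) := by simp
  have map_smul_dF (c : ℝ) (x : 𝔤) : C.d (F (c • x)) = c • C.d (F x) := by simp
  have equivariant_dF (x y : 𝔤) : C.L (ρ x) (C.d (F y)) = C.d (F ⁅x, y⁆) := by
    rw [C.L_d, hequiv]
  ⟨C.isAlternating_lowerF ρ hvan,
    ⟨map_add_dF, map_smul_dF, equivariant_dF, C.ι_d_eq_zero_of_equivariant ρ hequiv hvan⟩,
    fun _ => C.neg_one_pow_smul_d_lowerF ρ hequiv hvan⟩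

/-- Lemma 4.1 of the paper. For `F : 𝔤 → Ω^N` linear,
equivariant, with `ι_{v_x}(F x) = 0` for all `x`: (1) each `F_k` is alternating;
(2) `dF : x ↦ d(F x)` is linear, equivariant and satisfies `ι_{v_x}(d(F x)) = 0`;
(3) `(-1)^k d(F_{k+1}(x)) = (d_𝔤 F_k)(x) + (dF)_{k+1}(x)` for all `k ≥ 1`
(i.e. degrees `k+1 ≥ 2`); equivalently `d_tot F̃ = -(dF)~`. -/
theorem lowerF_chain_map (C : CartanCalculus) {𝔤 : Type} [LieRing 𝔤] [LieAlgebra ℝ 𝔤]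
    (ρ : 𝔤 →ₗ⁅ℝ⁆ C.X) (N : ℤ) (hN : 0 ≤ N) (F : 𝔤 →ₗ[ℝ] C.carrier)
    (hdeg : ∀ x : 𝔤, F x ∈ C.deg N)
    (hequiv : ∀ x y : 𝔤, C.L (ρ x) (F y) = F ⁅x, y⁆)
    (hvan : ∀ x : 𝔤, C.ι (ρ x) (F x) = 0) :
    (∀ k : ℕ, IsAlternating (C.lowerF ρ (fun y => F y) k)) ∧
    ((∀ x y : 𝔤, C.d (F (x + y)) = C.d (F x) + C.d (F y)) ∧
     (∀ (c : ℝ) (x : 𝔤), C.d (F (c • x)) = c • C.d (F x)) ∧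
     (∀ x y : 𝔤, C.L (ρ x) (C.d (F y)) = C.d (F ⁅x, y⁆)) ∧
     (∀ x : 𝔤, C.ι (ρ x) (C.d (F x)) = 0)) ∧
    (∀ k : ℕ, 1 ≤ k → ∀ x : Fin (k + 1) → 𝔤,
      ((-1 : ℝ) ^ k) • C.d (C.lowerF ρ (fun y => F y) (k + 1) x)
        = dCE k (C.lowerF ρ (fun y => F y) k) x
          + C.lowerF ρ (fun y => C.d (F y)) (k + 1) x) := by
  obtain ⟨alternating, dF_properties, chain_map⟩ := lowerF_chain_map_general C ρ F hequiv hvan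
  exact ⟨alternating, dF_properties, fun k _ => chain_map k⟩
end
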